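/- For every inverse temperature β ∈ (0,∞), there exist constants c_β > 0 and C_β < ∞ (depending only on β) such that for every integer N ≥ 2, the variance of the height at the origin under the discrete Gaussian long-range chain with range exponent α = 3 satisfies c_β N/ln N ≤ Var_{N,β,3}[φ(0)] ≤ C_β N/ln N. -/

import Mathlib

noncomputable section

/-- Configurations of the long-range chain of length `N`: integer-valued height functions
on `ℤ` vanishing outside `{-N, …, N}`. -/
def ChainConfig (N : ℕ) : Type :=
  {φ : ℤ → ℤ // ∀ k : ℤ, (N : ℤ) < |k| → φ k = 0}

/-- Energy `β ∑_{i ≠ j} |φ(i) − φ(j)|^q / |i − j|^α` of a configuration of the long-range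
chain with potential exponent `q` and range exponent `α`. -/
def chainEnergy (β α q : ℝ) (φ : ℤ → ℤ) : ℝ :=
  β * ∑' p : ℤ × ℤ,
      if p.1 = p.2 then 0
      else |((φ p.1 - φ p.2 : ℤ) : ℝ)| ^ q / |((p.1 - p.2 : ℤ) : ℝ)| ^ α

/-- Boltzmann weight of a configuration. -/
def chainWeight (β α q : ℝ) (φ : ℤ → ℤ) : ℝ :=
  Real.exp (-chainEnergy β α q φ)

/-- Partition function of the long-range chain. -/
def chainZ (N : ℕ) (β α q : ℝ) : ℝ :=
  ∑' φ : ChainConfig N, chainWeight β α q φ.val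

/-- Mean of the height at the origin. -/
def chainMean (N : ℕ) (β α q : ℝ) : ℝ :=
  (∑' φ : ChainConfig N, ((φ.val 0 : ℤ) : ℝ) * chainWeight β α q φ.val) / chainZ N β α q

/-- Variance of the height at the origin under the long-range chain `μ_{N,β,α}`
(with potential exponent `q`; `q = 2` is the discrete Gaussian chain,
`q ∈ (0,2)` the `q`-SOS chain). -/
def chainVar (N : ℕ) (β α q : ℝ) : ℝ :=
  (∑' φ : ChainConfig N, ((φ.val 0 : ℤ) : ℝ) ^ 2 * chainWeight β α q φ.val) / chainZ N β α q
    - chainMean N β α q ^ 2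

end

/-!
The energy `Q` is a quadratic form on the lattice of configurations and `F φ = φ 0` is additive.

*Lower bound* (Hammersley-Chapman-Robbins). Translating the measure by a configuration `a` changes
the mean of `F` by `F a`, and the likelihood scores of the translates by `a` and `b` have covariance
`exp (polar Q a b) - 1`. Take the indicators of the `N + 1` boxes `{-i, …, i}`, `i ≤ N`: they have
height `1` at the origin, and their Dirichlet pairings decay like `1 / (|i - j| + 1)`, so the
covariances sum to `O(N log N)`, and Cauchy-Schwarz gives a variance of order at least
`N ^ 2 / (N log N)`.

*Upper bound.* Rotating a pair of independent copies by `(x, y) ↦ (x + y, x - y)` and applying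
Cauchy-Schwarz on the cosets of `2Λ` gives `Z(t) ^ 4 ≤ Z(0) ^ 3 Z(2t)` for the partition function
`Z(t)` tilted by `t • F`. Iterating, the discrete Gaussian is subgaussian with the constant of the
real-valued Gaussian, so the variance is at most of the order of any `G` with `F ^ 2 ≤ G * Q`.
Telescoping `φ 0` along steps of length `s` costs energy of order `φ(0) ^ 2 / (N s)` at every scale
`s ≤ N`; adding up the scales, `G` can be taken of order `N / log N`.
-/

open Finset Real
open scoped ENNReal
open QuadraticMap (polar)

theorem sq_le_mul_of_hasSum {ι : Type*} {f g w : ι → ℝ} {A B C : ℝ} (hw : ∀ i, 0 ≤ w i)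
    (hf : HasSum (fun i ↦ f i ^ 2 * w i) A) (hg : HasSum (fun i ↦ g i ^ 2 * w i) B)
    (hfg : HasSum (fun i ↦ f i * g i * w i) C) : C ^ 2 ≤ A * B := by
  have quadratic_nonneg (x : ℝ) : 0 ≤ A * (x * x) + 2 * C * x + B := by
    refine (((hf.mul_left (x * x)).add (hfg.mul_left (2 * x))).add hg).nonneg
      (fun i ↦ ?_) |>.trans_eq (by ring)
    convert mul_nonneg (sq_nonneg (x * f i + g i)) (hw i) using 1
    ring
  have := discrim_le_zero quadratic_nonneg
  rw [discrim] at this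
  linarith

theorem one_add_sq_div_two_le_cosh (y : ℝ) : 1 + y ^ 2 / 2 ≤ cosh y := by
  have h : (y / 2) ^ 2 ≤ sinh (y / 2) ^ 2 := by
    rw [sq_le_sq, abs_sinh]
    exact self_le_sinh_iff.2 (abs_nonneg _)
  have := cosh_two_mul (y / 2)
  rw [cosh_sq, mul_div_cancel₀ y two_ne_zero] at this
  linarith

theorem exp_sub_one_le_mul_exp (x : ℝ) : exp x - 1 ≤ x * exp x := by
  have h : exp (-x) * exp x = 1 := by rw [← exp_add, neg_add_cancel, exp_zero]
  nlinarith [add_one_le_exp (-x), exp_pos x]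

theorem summable_exp_neg_mul_int_sq {c : ℝ} (hc : 0 < c) :
    Summable fun n : ℤ ↦ exp (-(c * (n : ℝ) ^ 2)) := by
  have summable_nat : Summable fun n : ℕ ↦ exp (-(c * (n : ℝ) ^ 2)) := by
    simpa only [neg_mul] using summable_exp_nat_mul_of_ge (neg_lt_zero.2 hc)
      (f := fun n ↦ (n : ℝ) ^ 2) fun n ↦ by exact_mod_cast Nat.le_self_pow two_ne_zero n
  exact .of_nat_of_neg (by simpa using summable_nat) (by simpa using summable_nat)

theorem summable_pi_prod {ι κ : Type*} [Fintype ι] {f : ι → κ → ℝ} (hf₀ : ∀ i k, 0 ≤ f i k)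
    (hf : ∀ i, Summable (f i)) : Summable fun x : ι → κ ↦ ∏ i, f i (x i) := by
  classical
  refine summable_of_sum_le (c := ∏ i, ∑' k, f i k) (fun x ↦ prod_nonneg fun i _ ↦ hf₀ i _)
    fun s ↦ ?_
  let box (i : ι) : Finset κ := s.image fun x ↦ x i
  have subset_box : s ⊆ Fintype.piFinset box := fun x hx ↦
    Fintype.mem_piFinset.2 fun i ↦ mem_image_of_mem (fun x ↦ x i) hx
  calc ∑ x ∈ s, ∏ i, f i (x i)
      ≤ ∑ x ∈ Fintype.piFinset box, ∏ i, f i (x i) :=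
        sum_le_sum_of_subset_of_nonneg subset_box fun x _ _ ↦ prod_nonneg fun i _ ↦ hf₀ i _
    _ = ∏ i, ∑ k ∈ box i, f i k := (prod_univ_sum box f).symm
    _ ≤ ∏ i, ∑' k, f i k := prod_le_prod (fun i _ ↦ sum_nonneg fun k _ ↦ hf₀ i k)
        fun i _ ↦ (hf i).sum_le_tsum _ fun k _ ↦ hf₀ i k

section DiscreteGaussian

variable {Λ : Type*} [AddCommGroup Λ] {Q : QuadraticMap ℤ Λ ℝ} {F : Λ →+ ℝ}

theorem quadraticMap_add_add_sub (Q : QuadraticMap ℤ Λ ℝ) (x y : Λ) :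
    Q (x + y) + Q (x - y) = 2 * Q x + 2 * Q y := by
  rw [sub_eq_add_neg, QuadraticMap.map_add Q x y, QuadraticMap.map_add Q x (-y),
    QuadraticMap.map_neg, QuadraticMap.polar_neg_right]
  ring

theorem quadraticMap_sub_add_sub (Q : QuadraticMap ℤ Λ ℝ) (x a b : Λ) :
    Q (x - a) + Q (x - b) = Q x + Q (x - (a + b)) - polar Q a b := by
  have split : Q (x - (a + b)) = Q (x - a) + Q (-b) + polar Q (x - a) (-b) := by
    rw [← QuadraticMap.map_add, sub_add_eq_sub_sub, sub_eq_add_neg]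
  have split_b : Q (x - b) = Q x + Q (-b) + polar Q x (-b) := by
    rw [← QuadraticMap.map_add, sub_eq_add_neg]
  rw [split, split_b, QuadraticMap.polar_sub_left, QuadraticMap.polar_neg_right,
    QuadraticMap.polar_neg_right]
  ring

/-- The likelihood ratio, minus one, of the discrete Gaussian measure with weight `exp (-Q x)`
translated by `a` against the untranslated one. -/
noncomputable def shiftScore (Q : QuadraticMap ℤ Λ ℝ) (a x : Λ) : ℝ := exp (Q x - Q (x - a)) - 1

theorem shiftScore_mul_exp (Q : QuadraticMap ℤ Λ ℝ) (a x : Λ) :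
    shiftScore Q a x * exp (-Q x) = exp (-Q (x - a)) - exp (-Q x) := by
  rw [shiftScore, sub_mul, one_mul, ← exp_add]
  ring_nf

theorem shiftScore_mul_shiftScore_mul_exp (Q : QuadraticMap ℤ Λ ℝ) (a b x : Λ) :
    shiftScore Q a x * shiftScore Q b x * exp (-Q x) = exp (polar Q a b) * exp (-Q (x - (a + b)))
      - exp (-Q (x - a)) - exp (-Q (x - b)) + exp (-Q x) := by
  have cross : exp (Q x - Q (x - a)) * exp (-Q (x - b))
      = exp (polar Q a b) * exp (-Q (x - (a + b))) := by
    rw [← exp_add, ← exp_add]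
    congr 1
    linarith [quadraticMap_sub_add_sub Q x a b]
  rw [mul_assoc, shiftScore_mul_exp, ← cross, shiftScore]
  have tilt := shiftScore_mul_exp Q a x
  rw [shiftScore] at tilt
  linear_combination -tilt

theorem hasSum_comp_sub {f : Λ → ℝ} (hf : Summable f) (a : Λ) :
    HasSum (fun x ↦ f (x - a)) (∑' x, f x) :=
  (Equiv.subRight a).hasSum_iff.2 hf.hasSum

theorem hasSum_mul_shiftScore (hZ : Summable fun x ↦ exp (-Q x))
    (hF : Summable fun x ↦ F x ^ 2 * exp (-Q x)) (a : Λ) :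
    HasSum (fun x ↦ F x * shiftScore Q a x * exp (-Q x)) (F a * ∑' x, exp (-Q x)) := by
  have summable_mean : Summable fun x ↦ F x * exp (-Q x) := by
    refine .of_norm_bounded (hZ.add hF) fun x ↦ ?_
    rw [norm_mul, norm_of_nonneg (exp_pos _).le, norm_eq_abs, ← one_add_mul, ← sq_abs]
    gcongr
    nlinarith [sq_nonneg (|F x| - 1), abs_nonneg (F x)]
  have translated := hasSum_comp_sub (summable_mean.add (hZ.mul_left (F a))) a
  have difference := translated.sub summable_mean.hasSum
  rw [summable_mean.tsum_add (hZ.mul_left _), tsum_mul_left, add_sub_cancel_left] at difference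
  refine difference.congr_fun fun x ↦ ?_
  rw [mul_assoc, shiftScore_mul_exp, map_sub F]
  ring

theorem hasSum_shiftScore_mul_shiftScore (hZ : Summable fun x ↦ exp (-Q x)) (a b : Λ) :
    HasSum (fun x ↦ shiftScore Q a x * shiftScore Q b x * exp (-Q x))
      ((exp (polar Q a b) - 1) * ∑' x, exp (-Q x)) := by
  have translated := hasSum_comp_sub hZ
  have expanded := ((((translated (a + b)).mul_left (exp (polar Q a b))).sub (translated a)).sub
    (translated b)).add hZ.hasSum
  rw [sub_add_cancel, ← sub_one_mul] at expanded
  exact expanded.congr_fun fun x ↦ shiftScore_mul_shiftScore_mul_exp Q a b x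

-- Hammersley-Chapman-Robbins: Cauchy-Schwarz against a sum of likelihood scores.
theorem sq_sum_mul_tsum_le {ι : Type*} (s : Finset ι) (a : ι → Λ)
    (hZ : Summable fun x ↦ exp (-Q x)) (hF : Summable fun x ↦ F x ^ 2 * exp (-Q x)) :
    (∑ k ∈ s, F (a k)) ^ 2 * ∑' x, exp (-Q x) ≤
      (∑ k ∈ s, ∑ l ∈ s, (exp (polar Q (a k) (a l)) - 1)) * ∑' x, F x ^ 2 * exp (-Q x) := by
  have hasSum_cross : HasSum (fun x ↦ F x * (∑ k ∈ s, shiftScore Q (a k) x) * exp (-Q x))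
      ((∑ k ∈ s, F (a k)) * ∑' x, exp (-Q x)) := by
    simpa only [mul_sum, sum_mul] using hasSum_sum fun k _ ↦ hasSum_mul_shiftScore hZ hF (a k)
  have hasSum_sq : HasSum (fun x ↦ (∑ k ∈ s, shiftScore Q (a k) x) ^ 2 * exp (-Q x))
      ((∑ k ∈ s, ∑ l ∈ s, (exp (polar Q (a k) (a l)) - 1)) * ∑' x, exp (-Q x)) := by
    simp_rw [sum_mul]
    refine (hasSum_sum fun k _ ↦ hasSum_sum fun l _ ↦
      hasSum_shiftScore_mul_shiftScore hZ (a k) (a l)).congr_fun fun x ↦ ?_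
    simp_rw [pow_two, sum_mul_sum, sum_mul]
  have cauchy_schwarz :=
    sq_le_mul_of_hasSum (fun x ↦ (exp_pos (-Q x)).le) hF.hasSum hasSum_sq hasSum_cross
  have Z_pos : 0 < ∑' x, exp (-Q x) := hZ.tsum_pos (fun x ↦ (exp_pos _).le) 0 (exp_pos _)
  refine le_of_mul_le_mul_right ?_ Z_pos
  linarith

/-- The subgroup `2Λ` of doubles: the image of `(x, y) ↦ (x + y, x - y)` consists of the pairs that
are congruent modulo it. -/
abbrev doubles (Λ : Type*) [AddCommGroup Λ] : AddSubgroup Λ := (nsmulAddMonoidHom (α := Λ) 2).range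

/-- The sum of `f` over a coset of the subgroup of doubles. -/
noncomputable def cosetSum (f : Λ → ℝ≥0∞) (c : Λ ⧸ doubles Λ) : ℝ≥0∞ :=
  ∑' u : QuotientAddGroup.mk ⁻¹' {c}, f u

theorem tsum_sub_two_nsmul [IsAddTorsionFree Λ] (g : Λ → ℝ≥0∞) (u : Λ) :
    ∑' y, g (u - 2 • y) = cosetSum g u := by
  have mem_fiber (v : Λ) : v ∈ Set.range (fun y ↦ u - 2 • y) ↔
      v ∈ (QuotientAddGroup.mk ⁻¹' {(u : Λ ⧸ doubles Λ)} : Set Λ) := by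
    rw [Set.mem_preimage, Set.mem_singleton_iff, eq_comm, QuotientAddGroup.eq_iff_sub_mem]
    exact exists_congr fun y ↦ sub_eq_iff_eq_add.trans <|
      eq_comm.trans eq_sub_iff_add_eq'.symm
  have injective_sub : Function.Injective fun y ↦ u - 2 • y :=
    sub_right_injective.comp (nsmul_right_injective two_ne_zero)
  rw [cosetSum, ← Set.ext mem_fiber, tsum_range _ injective_sub]

theorem tsum_tsum_add_mul_sub [IsAddTorsionFree Λ] (f g : Λ → ℝ≥0∞) :
    ∑' x, ∑' y, f (x + y) * g (x - y) = ∑' c, cosetSum f c * cosetSum g c :=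
  calc ∑' x, ∑' y, f (x + y) * g (x - y)
      = ∑' y, ∑' x, f (x + y) * g (x - y) := ENNReal.tsum_comm
    _ = ∑' y, ∑' u, f u * g (u - 2 • y) := tsum_congr fun y ↦ by
        rw [← (Equiv.addRight y).tsum_eq fun u ↦ f u * g (u - 2 • y)]
        simp only [Equiv.coe_addRight, two_nsmul, add_sub_add_right_eq_sub]
    _ = ∑' u, f u * cosetSum g u := by
        rw [ENNReal.tsum_comm]
        simp_rw [ENNReal.tsum_mul_left, tsum_sub_two_nsmul]
    _ = ∑' c, ∑' u : QuotientAddGroup.mk ⁻¹' {c}, f u * cosetSum g (u : Λ) :=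
        (ENNReal.tsum_fiberwise _ _).symm
    _ = ∑' c, cosetSum f c * cosetSum g c := tsum_congr fun c ↦ by
        rw [cosetSum, ← ENNReal.tsum_mul_right]
        exact tsum_congr fun u ↦ by rw [show ((u : Λ) : Λ ⧸ doubles Λ) = c from u.2]

/-- The partition function of the discrete Gaussian with weight `exp (-Q x)`, tilted by the
linear functional `t • F`; divided by its value at `t = 0` it is the Laplace transform of `F`. -/
noncomputable def tiltedPartition (Q : QuadraticMap ℤ Λ ℝ) (F : Λ →+ ℝ) (t : ℝ) : ℝ :=
  ∑' x, exp (-Q x + t * F x)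

theorem tiltedPartition_zero : tiltedPartition Q F 0 = ∑' x, exp (-Q x) := by
  simp only [tiltedPartition, zero_mul, add_zero]

theorem tiltedPartition_neg (t : ℝ) : tiltedPartition Q F (-t) = tiltedPartition Q F t := by
  rw [tiltedPartition, ← (Equiv.neg Λ).tsum_eq]
  simp only [Equiv.neg_apply, QuadraticMap.map_neg, map_neg, neg_mul_neg, tiltedPartition]

theorem tiltedPartition_pos {t : ℝ} (h : Summable fun x ↦ exp (-Q x + t * F x)) :
    0 < tiltedPartition Q F t :=
  h.tsum_pos (fun _ ↦ (exp_pos _).le) 0 (exp_pos _)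

/-- The tilted Gaussian weight at twice the temperature, which rotating a pair of independent copies
produces from the weight `exp (-Q x)`. It is `ℝ≥0∞`-valued so that sums may be rearranged freely. -/
noncomputable def halfWeight (Q : QuadraticMap ℤ Λ ℝ) (F : Λ →+ ℝ) (t : ℝ) (x : Λ) : ℝ≥0∞ :=
  .ofReal (exp (-(Q x / 2) + t * F x))

-- The parallelogram law is what makes the rotation `(x, y) ↦ (x + y, x - y)` factor the weights.
theorem halfWeight_add_mul_halfWeight_sub (a b : ℝ) (x y : Λ) :
    halfWeight Q F a (x + y) * halfWeight Q F b (x - y) =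
      .ofReal (exp (-Q x + (a + b) * F x)) * .ofReal (exp (-Q y + (a - b) * F y)) := by
  simp only [halfWeight]
  rw [← ENNReal.ofReal_mul (exp_pos _).le, ← ENNReal.ofReal_mul (exp_pos _).le, ← exp_add,
    ← exp_add, map_add F, map_sub F]
  congr 2
  linear_combination (-1 / 2) * quadraticMap_add_add_sub Q x y

theorem tsum_cosetSum_halfWeight_mul [IsAddTorsionFree Λ]
    (h : ∀ t, Summable fun x ↦ exp (-Q x + t * F x)) (a b : ℝ) :
    ∑' c, cosetSum (halfWeight Q F a) c * cosetSum (halfWeight Q F b) c =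
      .ofReal (tiltedPartition Q F (a + b) * tiltedPartition Q F (a - b)) := by
  have ofReal_tiltedPartition (t : ℝ) :
      ∑' x, ENNReal.ofReal (exp (-Q x + t * F x)) = .ofReal (tiltedPartition Q F t) :=
    (ENNReal.ofReal_tsum_of_nonneg (fun _ ↦ (exp_pos _).le) (h t)).symm
  rw [← tsum_tsum_add_mul_sub]
  simp_rw [halfWeight_add_mul_halfWeight_sub, ENNReal.tsum_mul_left, ENNReal.tsum_mul_right,
    ofReal_tiltedPartition]
  rw [ENNReal.ofReal_mul (tiltedPartition_pos (h _)).le]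

theorem hasSum_cosetSum_halfWeight_mul [IsAddTorsionFree Λ]
    (h : ∀ t, Summable fun x ↦ exp (-Q x + t * F x)) (a b : ℝ) :
    HasSum (fun c ↦ (cosetSum (halfWeight Q F a) c).toReal * (cosetSum (halfWeight Q F b) c).toReal)
      (tiltedPartition Q F (a + b) * tiltedPartition Q F (a - b)) := by
  have value := tsum_cosetSum_halfWeight_mul h a b
  have ne_top := value.trans_ne ENNReal.ofReal_ne_top
  have hasSum := ENNReal.hasSum_toReal ne_top
  rw [← ENNReal.tsum_toReal_eq (ENNReal.ne_top_of_tsum_ne_top ne_top), value,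
    ENNReal.toReal_ofReal
      (mul_pos (tiltedPartition_pos (h _)) (tiltedPartition_pos (h _))).le] at hasSum
  exact hasSum.congr_fun fun c ↦ ENNReal.toReal_mul.symm

theorem tiltedPartition_pow_four_le [IsAddTorsionFree Λ]
    (h : ∀ t, Summable fun x ↦ exp (-Q x + t * F x)) (t : ℝ) :
    tiltedPartition Q F t ^ 4 ≤ tiltedPartition Q F 0 ^ 3 * tiltedPartition Q F (2 * t) := by
  have diagonal (a : ℝ) := hasSum_cosetSum_halfWeight_mul h a a
  have cauchy_schwarz := sq_le_mul_of_hasSum (w := 1) (fun _ ↦ zero_le_one)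
    (by simpa only [Pi.one_apply, mul_one, pow_two] using diagonal 0)
    (by simpa only [Pi.one_apply, mul_one, pow_two] using diagonal t)
    (by simpa only [Pi.one_apply, mul_one] using hasSum_cosetSum_halfWeight_mul h 0 t)
  simp only [zero_add, zero_sub, tiltedPartition_neg, sub_self, ← two_mul, mul_zero]
    at cauchy_schwarz
  linarith

-- Iterating `t ↦ 2 * t` amplifies the constant `D` to a `4 ^ k`-th power, which removes it.
theorem le_exp_of_pow_four_le {R : ℝ → ℝ} {κ D : ℝ} (hR₀ : ∀ t, 0 ≤ R t)
    (hR : ∀ t, R t ^ 4 ≤ R (2 * t)) (hD : ∀ t, R t ≤ D * exp (κ * t ^ 2)) (t : ℝ) :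
    R t ≤ exp (κ * t ^ 2) := by
  have iterate (k : ℕ) : R t ^ 4 ^ k ≤ R (2 ^ k * t) := by
    induction k with
    | zero => simp
    | succ k ih =>
      calc R t ^ 4 ^ (k + 1) = (R t ^ 4 ^ k) ^ 4 := by rw [← pow_mul, pow_succ]
        _ ≤ R (2 ^ k * t) ^ 4 := pow_le_pow_left₀ (pow_nonneg (hR₀ t) _) ih 4
        _ ≤ R (2 * (2 ^ k * t)) := hR _
        _ = R (2 ^ (k + 1) * t) := by rw [pow_succ', mul_assoc]
  have rescaled (k : ℕ) : (R t / exp (κ * t ^ 2)) ^ 4 ^ k ≤ D := by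
    rw [div_pow, div_le_iff₀ (by positivity), ← exp_nat_mul]
    refine (iterate k).trans ((hD _).trans_eq ?_)
    have : (4 : ℝ) ^ k = (2 ^ k) ^ 2 := by rw [← pow_mul, mul_comm, pow_mul]; norm_num
    push_cast
    rw [this]
    ring_nf
  rw [← div_le_one (exp_pos _)]
  by_contra! one_lt
  obtain ⟨n, hn⟩ := pow_unbounded_of_one_lt D one_lt
  have := pow_le_pow_right₀ one_lt.le (Nat.lt_pow_self (n := n) (show 1 < 4 by norm_num)).le
  linarith [rescaled n]

theorem neg_add_mul_le_of_sq_le {G q f : ℝ} (hG : 0 < G) (h : f ^ 2 ≤ G * q) (t : ℝ) :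
    -q + t * f ≤ G / 2 * t ^ 2 + -(q / 2) := by
  have amgm : 2 * (G * t) * f ≤ (G * t) ^ 2 + f ^ 2 := two_mul_le_add_sq _ _
  refine le_of_mul_le_mul_left ?_ hG
  linarith

section SubGaussian

variable {G : ℝ}

theorem exp_neg_add_mul_le_exp_mul_exp (hG : 0 < G) (hFQ : ∀ x, F x ^ 2 ≤ G * Q x) (t : ℝ) (x : Λ) :
    exp (-Q x + t * F x) ≤ exp (G / 2 * t ^ 2) * exp (-(Q x / 2)) := by
  rw [← exp_add, exp_le_exp]
  exact neg_add_mul_le_of_sq_le hG (hFQ x) t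

theorem summable_exp_neg_add_mul (hG : 0 < G) (hFQ : ∀ x, F x ^ 2 ≤ G * Q x)
    (hQ : Summable fun x ↦ exp (-(Q x / 2))) (t : ℝ) :
    Summable fun x ↦ exp (-Q x + t * F x) :=
  .of_nonneg_of_le (fun _ ↦ (exp_pos _).le) (exp_neg_add_mul_le_exp_mul_exp hG hFQ t)
    (hQ.mul_left _)

theorem summable_sq_mul_exp_neg (hG : 0 < G) (hFQ : ∀ x, F x ^ 2 ≤ G * Q x)
    (hQ : Summable fun x ↦ exp (-(Q x / 2))) : Summable fun x ↦ F x ^ 2 * exp (-Q x) := by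
  refine .of_nonneg_of_le (fun _ ↦ by positivity) (fun x ↦ ?_) (hQ.mul_left (2 * G))
  have half_le : Q x / 2 ≤ exp (Q x / 2) := by linarith [add_one_le_exp (Q x / 2)]
  calc F x ^ 2 * exp (-Q x) ≤ 2 * G * (Q x / 2) * exp (-Q x) := by
        gcongr
        linarith [hFQ x]
    _ ≤ 2 * G * exp (Q x / 2) * exp (-Q x) := by gcongr
    _ = 2 * G * exp (-(Q x / 2)) := by
        rw [mul_assoc, ← exp_add]
        ring_nf

variable [IsAddTorsionFree Λ]

theorem tiltedPartition_le (hG : 0 < G) (hFQ : ∀ x, F x ^ 2 ≤ G * Q x)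
    (hQ : Summable fun x ↦ exp (-(Q x / 2))) (t : ℝ) :
    tiltedPartition Q F t ≤ exp (G / 2 * t ^ 2) * tiltedPartition Q F 0 := by
  have tilt := summable_exp_neg_add_mul hG hFQ hQ
  have Z_pos (t : ℝ) : 0 < tiltedPartition Q F t := tiltedPartition_pos (tilt t)
  rw [← div_le_iff₀ (Z_pos 0)]
  refine le_exp_of_pow_four_le (R := fun t ↦ tiltedPartition Q F t / tiltedPartition Q F 0)
    (D := (∑' x, exp (-(Q x / 2))) / tiltedPartition Q F 0)
    (fun t ↦ (div_pos (Z_pos t) (Z_pos 0)).le) (fun t ↦ ?_) (fun t ↦ ?_) t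
  · rw [div_pow, div_le_div_iff₀ (pow_pos (Z_pos 0) 4) (Z_pos 0)]
    linarith [mul_le_mul_of_nonneg_right (tiltedPartition_pow_four_le tilt t) (Z_pos 0).le]
  · rw [div_mul_eq_mul_div, mul_comm _ (exp _), ← tsum_mul_left]
    exact div_le_div_of_nonneg_right ((tilt t).tsum_le_tsum
      (exp_neg_add_mul_le_exp_mul_exp hG hFQ t) (hQ.mul_left _)) (Z_pos 0).le

theorem tsum_sq_mul_exp_neg_le (hG : 0 < G) (hFQ : ∀ x, F x ^ 2 ≤ G * Q x)
    (hQ : Summable fun x ↦ exp (-(Q x / 2))) :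
    ∑' x, F x ^ 2 * exp (-Q x) ≤ 2 * G * ∑' x, exp (-Q x) := by
  obtain ⟨t, ht⟩ : ∃ t : ℝ, t ^ 2 = 2 / G := ⟨√(2 / G), sq_sqrt (by positivity)⟩
  have tilt := summable_exp_neg_add_mul hG hFQ hQ
  have sq_le_cosh (x : Λ) : F x ^ 2 * exp (-Q x) ≤
      G / 2 * (exp (-Q x + t * F x) + exp (-Q x + -t * F x)) - G * exp (-Q x + 0 * F x) := by
    have h := one_add_sq_div_two_le_cosh (t * F x)
    rw [mul_pow, ht, cosh_eq] at h
    rw [exp_add, exp_add, zero_mul, add_zero, neg_mul]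
    have sq_le : F x ^ 2 ≤ G / 2 * (exp (t * F x) + exp (-(t * F x))) - G := by
      have := mul_le_mul_of_nonneg_left h hG.le
      field_simp at this ⊢
      linarith
    linarith [mul_le_mul_of_nonneg_right sq_le (exp_pos (-Q x)).le]
  have summed := hasSum_le sq_le_cosh (summable_sq_mul_exp_neg hG hFQ hQ).hasSum
    ((((tilt t).hasSum.add (tilt (-t)).hasSum).mul_left (G / 2)).sub ((tilt 0).hasSum.mul_left G))
  have Z_le : tiltedPartition Q F t ≤ 3 * tiltedPartition Q F 0 := by
    refine (tiltedPartition_le hG hFQ hQ t).trans ?_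
    rw [ht, show G / 2 * (2 / G) = 1 by field_simp]
    have := tiltedPartition_pos (tilt 0)
    gcongr
    linarith [exp_one_lt_d9]
  change _ ≤ G / 2 * (tiltedPartition Q F t + tiltedPartition Q F (-t))
    - G * tiltedPartition Q F 0 at summed
  rw [tiltedPartition_neg] at summed
  rw [← tiltedPartition_zero (F := F)]
  linarith [mul_le_mul_of_nonneg_left Z_le hG.le]

end SubGaussian

end DiscreteGaussian

section Sums

theorem sum_range_sum_range_add_mul (g : ℕ → ℝ) (s n : ℕ) :
    ∑ a ∈ range s, ∑ l ∈ range n, g (a + l * s) = ∑ i ∈ range (n * s), g i := by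
  rw [sum_comm]
  induction n with
  | zero => simp
  | succ n ih =>
    rw [sum_range_succ, ih, Nat.succ_mul, sum_range_add]
    simp only [add_comm]

theorem sum_range_dist_le {f : ℕ → ℝ} (hf : ∀ d, 0 ≤ f d) {k n : ℕ} (hk : k < n) :
    ∑ l ∈ range n, f (k.dist l) ≤ 2 * ∑ d ∈ range n, f d := by
  have left : ∑ l ∈ range k, f (k.dist l) ≤ ∑ d ∈ range n, f d := by
    calc ∑ l ∈ range k, f (k.dist l) = ∑ l ∈ range k, f (k - 1 - l + 1) :=
          sum_congr rfl fun l hl ↦ by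
            have := mem_range.1 hl
            rw [Nat.dist_eq_sub_of_le_right this.le]
            congr 1
            lia
      _ = ∑ l ∈ range k, f (l + 1) := sum_range_reflect (fun l ↦ f (l + 1)) k
      _ ≤ ∑ d ∈ range (k + 1), f d := by
          rw [sum_range_succ']
          exact le_add_of_nonneg_right (hf 0)
      _ ≤ ∑ d ∈ range n, f d :=
          sum_le_sum_of_subset_of_nonneg (range_subset_range.2 hk) fun d _ _ ↦ hf d
  have right : ∑ l ∈ Ico k n, f (k.dist l) ≤ ∑ d ∈ range n, f d := by
    rw [sum_Ico_eq_sum_range]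
    simp only [Nat.dist_eq_sub_of_le (Nat.le_add_right k _), Nat.add_sub_cancel_left]
    exact sum_le_sum_of_subset_of_nonneg (range_subset_range.2 (Nat.sub_le n k)) fun d _ _ ↦ hf d
  rw [← sum_range_add_sum_Ico _ hk.le]
  linarith

theorem sum_range_sum_range_dist_le {f : ℕ → ℝ} (hf : ∀ d, 0 ≤ f d) (n : ℕ) :
    ∑ k ∈ range n, ∑ l ∈ range n, f (k.dist l) ≤ n * (2 * ∑ d ∈ range n, f d) := by
  refine (sum_le_sum fun k hk ↦ sum_range_dist_le hf (mem_range.1 hk)).trans_eq ?_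
  rw [sum_const, card_range, nsmul_eq_mul]

theorem sum_range_one_div_add_one_le (n : ℕ) :
    ∑ d ∈ range n, 1 / ((d : ℝ) + 1) ≤ 1 + log n := by
  have := harmonic_le_one_add_log n
  rw [harmonic] at this
  push_cast at this
  simpa only [one_div] using this

theorem log_le_sum_Icc_inv (n : ℕ) : log n ≤ ∑ s ∈ Icc 1 n, (s : ℝ)⁻¹ := by
  have log_le : log n ≤ log (n + 1 : ℕ) := by
    rcases n.eq_zero_or_pos with rfl | hn
    · simp
    · exact log_le_log (by exact_mod_cast hn) (by exact_mod_cast n.le_succ)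
  have := log_le.trans (log_add_one_le_harmonic n)
  rw [harmonic_eq_sum_Icc] at this
  push_cast at this
  exact this

theorem hasSum_comp_natAbs {f : ℕ → ℝ} {a : ℝ} (hf : HasSum f a) :
    HasSum (fun d : ℤ ↦ f d.natAbs) (a + a - f 0) :=
  .of_nat_of_neg (by simpa using hf) (by simpa using hf)

theorem summable_tail_inv_sq (r : ℕ) :
    Summable fun n : ℕ ↦ if r < n then ((n : ℝ) ^ 2)⁻¹ else 0 :=
  .of_nonneg_of_le (fun n ↦ by positivity) (fun n ↦ by split_ifs <;> [rfl; positivity])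
    (summable_nat_pow_inv.2 one_lt_two)

theorem tsum_tail_inv_sq_le (r : ℕ) :
    ∑' n : ℕ, (if r < n then ((n : ℝ) ^ 2)⁻¹ else 0) ≤ 2 / (r + 1) := by
  refine Real.tsum_le_of_sum_range_le (fun n ↦ by positivity) fun n ↦ ?_
  have filter_eq : {i ∈ range n | r < i} = Ioo r n := by
    ext i
    simp only [mem_filter, mem_range, mem_Ioo, and_comm]
  rw [← sum_filter, filter_eq]
  exact sum_Ioo_inv_sq_le r n

end Sums

section Increments

/-- The sum of the squared increments of step `s` of `f` started in `{0, …, n - 1}`: the part of the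
Dirichlet energy of `f` carried by the scale `s`, up to the kernel. -/
noncomputable def sumSqIncrements (f : ℕ → ℝ) (n s : ℕ) : ℝ :=
  ∑ i ∈ range n, (f i - f (i + s)) ^ 2

theorem sumSqIncrements_nonneg (f : ℕ → ℝ) (n s : ℕ) : 0 ≤ sumSqIncrements f n s :=
  sum_nonneg fun _ _ ↦ sq_nonneg _

theorem sumSqIncrements_mono (f : ℕ → ℝ) {m n : ℕ} (h : m ≤ n) (s : ℕ) :
    sumSqIncrements f m s ≤ sumSqIncrements f n s :=
  sum_le_sum_of_subset_of_nonneg (range_subset_range.2 h) fun _ _ _ ↦ sq_nonneg _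

theorem sq_sub_le_mul_sumSqIncrements (f : ℕ → ℝ) (n : ℕ) :
    (f 0 - f n) ^ 2 ≤ n * sumSqIncrements f n 1 := by
  rw [← sum_range_sub' f n, sumSqIncrements]
  simpa only [card_range] using
    sq_sum_le_card_mul_sum_sq (s := range n) (f := fun l ↦ f l - f (l + 1))

theorem sum_range_sq_le_mul_sumSqIncrements {f : ℕ → ℝ} {n s : ℕ} (hf : ∀ m, n * s ≤ m → f m = 0) :
    ∑ a ∈ range s, f a ^ 2 ≤ n * sumSqIncrements f (n * s) s := by
  have sq_le (a : ℕ) : f a ^ 2 ≤ n * ∑ l ∈ range n, (f (a + l * s) - f (a + l * s + s)) ^ 2 := by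
    have h := sq_sub_le_mul_sumSqIncrements (fun l ↦ f (a + l * s)) n
    simpa only [sumSqIncrements, hf _ (Nat.le_add_left _ a), zero_mul, add_zero, sub_zero,
      Nat.succ_mul, ← add_assoc] using h
  refine (sum_le_sum fun a _ ↦ sq_le a).trans_eq ?_
  rw [← mul_sum, sum_range_sum_range_add_mul (fun i ↦ (f i - f (i + s)) ^ 2), sumSqIncrements]

theorem mul_sq_le_sum_range_sq_add (f : ℕ → ℝ) (s : ℕ) :
    s * f 0 ^ 2 ≤ 2 * ∑ a ∈ range s, f a ^ 2 + 2 * (s * (s * sumSqIncrements f s 1)) := by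
  have sq_le (a : ℕ) (ha : a ∈ range s) :
      f 0 ^ 2 ≤ 2 * f a ^ 2 + 2 * (s * sumSqIncrements f s 1) := by
    have ha := (mem_range.1 ha).le
    have near : (f 0 - f a) ^ 2 ≤ s * sumSqIncrements f s 1 := by
      refine (sq_sub_le_mul_sumSqIncrements f a).trans ?_
      gcongr
      · exact sumSqIncrements_nonneg f a 1
      · exact sumSqIncrements_mono f ha 1
    linarith [sq_nonneg (f 0 - 2 * f a)]
  have summed := sum_le_sum sq_le
  rw [sum_add_distrib, ← mul_sum, sum_const, sum_const, card_range, nsmul_eq_mul,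
    nsmul_eq_mul] at summed
  linarith

theorem sq_div_le_sumSqIncrements {f : ℕ → ℝ} {N s : ℕ} (hf : ∀ m, N < m → f m = 0) (hs : 1 ≤ s)
    (hsN : s ≤ N) :
    f 0 ^ 2 / (2 * N) * (s : ℝ)⁻¹ ≤ 2 * (sumSqIncrements f (2 * N) s / (s : ℝ) ^ 3) +
      2 * sumSqIncrements f (2 * N) 1 / N := by
  obtain ⟨n, lt_mul, mul_le⟩ : ∃ n, N < n * s ∧ n * s ≤ 2 * N := by
    refine ⟨N / s + 1, Nat.lt_mul_of_div_lt (Nat.lt_succ_self _) hs, ?_⟩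
    have := Nat.div_mul_le_self N s
    rw [Nat.succ_mul]
    lia
  have scaled : s * f 0 ^ 2 ≤ 2 * (n * sumSqIncrements f (2 * N) s) +
      2 * (s * (s * sumSqIncrements f (2 * N) 1)) := by
    refine (mul_sq_le_sum_range_sq_add f s).trans ?_
    gcongr
    · refine (sum_range_sq_le_mul_sumSqIncrements (n := n) fun m hm ↦ hf m (by lia)).trans ?_
      gcongr
      exact sumSqIncrements_mono f mul_le s
    · exact sumSqIncrements_mono f (by lia) 1
  have n_pos : (0 : ℝ) < n := by exact_mod_cast Nat.pos_of_ne_zero (by rintro rfl; lia)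
  have N_pos : (0 : ℝ) < N := by exact_mod_cast hs.trans hsN
  have mul_le' : (n * s : ℝ) ≤ 2 * N := by exact_mod_cast mul_le
  calc f 0 ^ 2 / (2 * N) * (s : ℝ)⁻¹ ≤ f 0 ^ 2 / (n * s) * (s : ℝ)⁻¹ := by gcongr f 0 ^ 2 / ?_ * _
    _ = s * f 0 ^ 2 / (n * s ^ 3) := by field_simp
    _ ≤ (2 * (n * sumSqIncrements f (2 * N) s) + 2 * (s * (s * sumSqIncrements f (2 * N) 1))) /
        (n * s ^ 3) := by gcongr
    _ = 2 * (sumSqIncrements f (2 * N) s / (s : ℝ) ^ 3) +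
        2 * sumSqIncrements f (2 * N) 1 / (n * s) := by field_simp
    _ ≤ _ := by
        have := sumSqIncrements_nonneg f (2 * N) 1
        gcongr
        exact_mod_cast lt_mul.le

-- Every scale `s ≤ N` contributes a term of order `f 0 ^ 2 / (N * s)`: hence the logarithm.
theorem sq_le_mul_sum_sumSqIncrements {f : ℕ → ℝ} {N : ℕ} (hf : ∀ m, N < m → f m = 0)
    (hN : 2 ≤ N) :
    f 0 ^ 2 ≤ 8 * N / log N * ∑ s ∈ Icc 1 N, sumSqIncrements f (2 * N) s / (s : ℝ) ^ 3 := by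
  have N_pos : (0 : ℝ) < N := by positivity
  have log_pos : 0 < log N := log_pos (by exact_mod_cast hN)
  have unit_step_le : sumSqIncrements f (2 * N) 1 ≤
      ∑ s ∈ Icc 1 N, sumSqIncrements f (2 * N) s / (s : ℝ) ^ 3 := by
    have := single_le_sum (f := fun s : ℕ ↦ sumSqIncrements f (2 * N) s / (s : ℝ) ^ 3)
      (fun s _ ↦ div_nonneg (sumSqIncrements_nonneg f _ s) (by positivity))
      (mem_Icc.2 ⟨le_rfl, by lia⟩ : 1 ∈ Icc 1 N)
    rwa [Nat.cast_one, one_pow, div_one] at this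
  have summed := sum_le_sum fun s hs ↦
    sq_div_le_sumSqIncrements hf (mem_Icc.1 hs).1 (mem_Icc.1 hs).2
  rw [sum_add_distrib, ← mul_sum, ← mul_sum, sum_const, Nat.card_Icc, Nat.add_sub_cancel,
    nsmul_eq_mul, mul_div_cancel₀ _ N_pos.ne'] at summed
  have log_bound : f 0 ^ 2 / (2 * N) * log N ≤ f 0 ^ 2 / (2 * N) * ∑ s ∈ Icc 1 N, (s : ℝ)⁻¹ := by
    gcongr
    exact log_le_sum_Icc_inv N
  have := log_bound.trans summed
  rw [div_mul_eq_mul_div, le_div_iff₀ log_pos]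
  field_simp at this
  linarith [mul_le_mul_of_nonneg_left unit_step_le N_pos.le]

end Increments

namespace ChainConfig

variable {N : ℕ}

/-- The subgroup of `ℤ → ℤ` underlying `ChainConfig N`, which is the source of its group
structure. -/
def toAddSubgroup (N : ℕ) : AddSubgroup (ℤ → ℤ) where
  carrier := {φ | ∀ k : ℤ, (N : ℤ) < |k| → φ k = 0}
  zero_mem' _ _ := rfl
  add_mem' hφ hψ k hk := by rw [Pi.add_apply, hφ k hk, hψ k hk, add_zero]
  neg_mem' hφ k hk := by rw [Pi.neg_apply, hφ k hk, neg_zero]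

instance (N : ℕ) : AddCommGroup (ChainConfig N) := inferInstanceAs (AddCommGroup (toAddSubgroup N))

instance (N : ℕ) : IsAddTorsionFree (ChainConfig N) :=
  inferInstanceAs (IsAddTorsionFree (toAddSubgroup N))

theorem val_add (φ ψ : ChainConfig N) : (φ + ψ).val = φ.val + ψ.val := rfl

theorem val_neg (φ : ChainConfig N) : (-φ).val = -φ.val := rfl

theorem val_zsmul (n : ℤ) (φ : ChainConfig N) : (n • φ).val = n • φ.val := rfl

/-- The height at the origin, as an additive functional of the configuration. -/
def heightAtOrigin (N : ℕ) : ChainConfig N →+ ℝ where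
  toFun φ := φ.val 0
  map_zero' := Int.cast_zero
  map_add' φ ψ := by rw [val_add, Pi.add_apply, Int.cast_add]

theorem heightAtOrigin_apply (φ : ChainConfig N) : heightAtOrigin N φ = φ.val 0 := rfl

theorem apply_eq_zero_of_notMem_Icc (φ : ChainConfig N) {k : ℤ} (hk : k ∉ Icc (-(N : ℤ)) N) :
    φ.val k = 0 :=
  φ.2 k (not_le.1 fun h ↦ hk (mem_Icc.2 (abs_le.1 h)))

end ChainConfig

section DirichletForm

variable {N : ℕ} {α β : ℝ}

/-- The increment of step `d` of a height function started at `i`. -/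
def increment (φ : ℤ → ℤ) (d i : ℤ) : ℝ := (φ i - φ (i + d) : ℤ)

/-- The contribution of the pair of sites `i`, `i + d` to the Dirichlet form of the chain, where
`p = (d, i)`. It vanishes for `d = 0`. -/
noncomputable def dirichletTerm (α : ℝ) (φ ψ : ℤ → ℤ) (p : ℤ × ℤ) : ℝ :=
  |(p.1 : ℝ)| ^ (-α) * (increment φ p.1 p.2 * increment ψ p.1 p.2)

theorem dirichletTerm_self_nonneg (α : ℝ) (φ : ℤ → ℤ) (p : ℤ × ℤ) : 0 ≤ dirichletTerm α φ φ p :=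
  mul_nonneg (by positivity) (mul_self_nonneg _)

theorem dirichletTerm_comm (α : ℝ) (φ ψ : ℤ → ℤ) : dirichletTerm α φ ψ = dirichletTerm α ψ φ := by
  simp only [funext_iff, dirichletTerm, mul_comm (increment φ _ _), implies_true]

theorem dirichletTerm_add_left (α : ℝ) (φ₁ φ₂ ψ : ℤ → ℤ) (p : ℤ × ℤ) :
    dirichletTerm α (φ₁ + φ₂) ψ p = dirichletTerm α φ₁ ψ p + dirichletTerm α φ₂ ψ p := by
  simp only [dirichletTerm, increment, Pi.add_apply]
  push_cast
  ring

theorem dirichletTerm_zsmul_left (α : ℝ) (n : ℤ) (φ ψ : ℤ → ℤ) (p : ℤ × ℤ) :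
    dirichletTerm α (n • φ) ψ p = n * dirichletTerm α φ ψ p := by
  simp only [dirichletTerm, increment, Pi.smul_apply, smul_eq_mul]
  push_cast
  ring

theorem chainEnergy_eq_mul_tsum_dirichletTerm (β α : ℝ) (φ : ℤ → ℤ) :
    chainEnergy β α 2 φ = β * ∑' p, dirichletTerm α φ φ p := by
  let toPair : ℤ × ℤ ≃ ℤ × ℤ := (Equiv.prodComm ℤ ℤ).trans (Equiv.prodShear (.refl ℤ) Equiv.addLeft)
  have toPair_apply (d i : ℤ) : toPair (d, i) = (i, i + d) := rfl
  rw [chainEnergy, ← toPair.tsum_eq]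
  congr 1
  refine tsum_congr fun ⟨d, i⟩ ↦ ?_
  rw [toPair_apply, dirichletTerm, increment, rpow_neg (abs_nonneg _), rpow_two, sq_abs, sq]
  rcases eq_or_ne d 0 with rfl | hd
  · simp
  · rw [if_neg (by simpa using hd), sub_add_cancel_left, Int.cast_neg, abs_neg, div_eq_inv_mul]

theorem summable_dirichletTerm_self (hα : 1 < α) (φ : ChainConfig N) :
    Summable (dirichletTerm α φ.val φ.val) := by
  have summable_sq : Summable fun i : ℤ ↦ (φ.val i : ℝ) ^ 2 :=
    summable_of_ne_finset_zero (s := Icc (-(N : ℤ)) N) fun i hi ↦ by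
      rw [φ.apply_eq_zero_of_notMem_Icc hi, Int.cast_zero, zero_pow two_ne_zero]
  have start : Summable fun p : ℤ × ℤ ↦ |(p.1 : ℝ)| ^ (-α) * (φ.val p.2 : ℝ) ^ 2 :=
    (summable_abs_int_rpow hα).mul_of_nonneg summable_sq (fun _ ↦ by positivity)
      fun _ ↦ by positivity
  have finish : Summable fun p : ℤ × ℤ ↦ |(p.1 : ℝ)| ^ (-α) * (φ.val (p.2 + p.1) : ℝ) ^ 2 :=
    (Equiv.prodShear (.refl ℤ) Equiv.addRight).summable_iff.2 start
  refine .of_nonneg_of_le (dirichletTerm_self_nonneg α φ.val) (fun p ↦ ?_)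
    ((start.add finish).mul_left 2)
  rw [dirichletTerm, increment, ← mul_add, mul_left_comm (2 : ℝ), Int.cast_sub]
  gcongr _ * ?_
  linarith [sq_nonneg ((φ.val p.2 : ℝ) + φ.val (p.2 + p.1))]

theorem summable_dirichletTerm (hα : 1 < α) (φ ψ : ChainConfig N) :
    Summable (dirichletTerm α φ.val ψ.val) := by
  refine .of_norm_bounded
    ((summable_dirichletTerm_self hα φ).add (summable_dirichletTerm_self hα ψ)) fun p ↦ ?_
  rw [dirichletTerm, dirichletTerm, dirichletTerm, ← mul_add, norm_mul,
    Real.norm_of_nonneg (by positivity : 0 ≤ |(p.1 : ℝ)| ^ (-α)), Real.norm_eq_abs]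
  gcongr
  have young (x y : ℝ) : |x * y| ≤ x * x + y * y :=
    abs_le.2 ⟨by nlinarith [sq_nonneg (x + y)], by nlinarith [sq_nonneg (x - y)]⟩
  exact young _ _

/-- The Dirichlet form `(φ, ψ) ↦ ∑_{i ≠ j} (φ i - φ j) (ψ i - ψ j) / |i - j| ^ α` of the chain. -/
noncomputable def dirichletForm (N : ℕ) (hα : 1 < α) : LinearMap.BilinMap ℤ (ChainConfig N) ℝ :=
  LinearMap.mk₂ ℤ (fun φ ψ ↦ ∑' p, dirichletTerm α φ.val ψ.val p)
    (fun φ₁ φ₂ ψ ↦ by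
      simp only [ChainConfig.val_add, dirichletTerm_add_left]
      exact (summable_dirichletTerm hα φ₁ ψ).tsum_add (summable_dirichletTerm hα φ₂ ψ))
    (fun n φ ψ ↦ by
      simp only [ChainConfig.val_zsmul, dirichletTerm_zsmul_left, tsum_mul_left]
      rw [zsmul_eq_mul])
    (fun φ ψ₁ ψ₂ ↦ by
      simp only [dirichletTerm_comm α φ.val, ChainConfig.val_add, dirichletTerm_add_left]
      exact (summable_dirichletTerm hα ψ₁ φ).tsum_add (summable_dirichletTerm hα ψ₂ φ))
    (fun n φ ψ ↦ by
      simp only [dirichletTerm_comm α φ.val, ChainConfig.val_zsmul, dirichletTerm_zsmul_left,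
        tsum_mul_left]
      rw [zsmul_eq_mul])

theorem dirichletForm_apply (hα : 1 < α) (φ ψ : ChainConfig N) :
    dirichletForm N hα φ ψ = ∑' p, dirichletTerm α φ.val ψ.val p := rfl

theorem dirichletForm_comm (hα : 1 < α) (φ ψ : ChainConfig N) :
    dirichletForm N hα φ ψ = dirichletForm N hα ψ φ := by
  rw [dirichletForm_apply, dirichletForm_apply, dirichletTerm_comm]

theorem sum_dirichletTerm_comp_le {ι : Type*} {f : ι → ℤ × ℤ} (hα : 1 < α) (φ : ChainConfig N)
    (s : Finset ι) (hf : f.Injective) :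
    ∑ i ∈ s, dirichletTerm α φ.val φ.val (f i) ≤ dirichletForm N hα φ φ := by
  have := (summable_dirichletTerm_self hα φ).sum_le_tsum (s.map ⟨f, hf⟩) fun p _ ↦
    dirichletTerm_self_nonneg α φ.val p
  rwa [sum_map] at this

/-- The energy of the discrete Gaussian chain as a quadratic form on configurations. -/
noncomputable def energyForm (N : ℕ) (β : ℝ) (hα : 1 < α) : QuadraticMap ℤ (ChainConfig N) ℝ :=
  (β • dirichletForm N hα).toQuadraticMap

theorem energyForm_apply (hα : 1 < α) (φ : ChainConfig N) :
    energyForm N β hα φ = β * dirichletForm N hα φ φ := rfl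

theorem polar_energyForm (hα : 1 < α) (φ ψ : ChainConfig N) :
    polar (energyForm N β hα) φ ψ = 2 * β * dirichletForm N hα φ ψ := by
  rw [energyForm, LinearMap.BilinMap.polar_toQuadraticMap, LinearMap.smul_apply,
    LinearMap.smul_apply, LinearMap.smul_apply, LinearMap.smul_apply, dirichletForm_comm hα ψ φ,
    smul_eq_mul]
  ring

theorem chainWeight_eq_exp_neg_energyForm (hα : 1 < α) (φ : ChainConfig N) :
    chainWeight β α 2 φ.val = exp (-energyForm N β hα φ) := by
  rw [chainWeight, chainEnergy_eq_mul_tsum_dirichletTerm, energyForm_apply, dirichletForm_apply]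

theorem chainEnergy_neg (β α q : ℝ) (φ : ℤ → ℤ) : chainEnergy β α q (-φ) = chainEnergy β α q φ := by
  refine congrArg (β * ·) (tsum_congr fun p ↦ ?_)
  rw [Pi.neg_apply, Pi.neg_apply, neg_sub_neg, ← neg_sub (φ p.1), Int.cast_neg, abs_neg]

theorem chainMean_eq_zero (N : ℕ) (β α q : ℝ) : chainMean N β α q = 0 := by
  set total := ∑' φ : ChainConfig N, (φ.val 0 : ℝ) * chainWeight β α q φ.val with total_def
  have total_eq_neg : total = -total := by
    rw [total_def, ← tsum_neg, ← (Equiv.neg (ChainConfig N)).tsum_eq]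
    refine tsum_congr fun φ ↦ ?_
    rw [Equiv.neg_apply, ChainConfig.val_neg, chainWeight, chainWeight, chainEnergy_neg,
      Pi.neg_apply, Int.cast_neg, neg_mul]
  rw [chainMean, ← total_def, self_eq_neg.1 total_eq_neg, zero_div]

theorem chainVar_eq_div (hα : 1 < α) :
    chainVar N β α 2 = (∑' φ, ChainConfig.heightAtOrigin N φ ^ 2 * exp (-energyForm N β hα φ)) /
      ∑' φ, exp (-energyForm N β hα φ) := by
  simp only [chainVar, chainZ, chainMean_eq_zero, chainWeight_eq_exp_neg_energyForm hα,
    zero_pow two_ne_zero, sub_zero, ChainConfig.heightAtOrigin_apply]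

theorem mul_sum_sq_le_dirichletForm (hα : 1 < α) (φ : ChainConfig N) :
    (2 * N + 1 : ℝ) ^ (-α) * ∑ i ∈ Icc (-(N : ℤ)) N, (φ.val i : ℝ) ^ 2 ≤
      dirichletForm N hα φ φ := by
  refine le_trans ?_ (sum_dirichletTerm_comp_le hα φ (Icc (-(N : ℤ)) N)
    (f := fun i ↦ (N + 1 - i, i)) fun i j h ↦ (Prod.mk.inj h).2)
  rw [mul_sum]
  refine sum_le_sum fun i hi ↦ ?_
  obtain ⟨hi_ge, hi_le⟩ := mem_Icc.1 hi
  have outside : φ.val (i + (N + 1 - i)) = 0 := φ.apply_eq_zero_of_notMem_Icc (by simp)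
  have step_pos : (0 : ℝ) < (N + 1 - i : ℤ) := by exact_mod_cast (by lia : 0 < N + 1 - i)
  have step_le : ((N + 1 - i : ℤ) : ℝ) ≤ 2 * N + 1 := by
    exact_mod_cast (by lia : (N + 1 - i : ℤ) ≤ 2 * N + 1)
  rw [dirichletTerm, increment, outside, sub_zero, ← sq, abs_of_pos step_pos]
  gcongr ?_ * _
  exact rpow_le_rpow_of_nonpos step_pos step_le (by linarith)

theorem summable_exp_neg_energyForm_div_two (hα : 1 < α) (hβ : 0 < β) :
    Summable fun φ : ChainConfig N ↦ exp (-(energyForm N β hα φ / 2)) := by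
  set c := β * (2 * N + 1 : ℝ) ^ (-α) / 2 with c_def
  have c_pos : 0 < c := by positivity
  have restrict_injective : (fun (φ : ChainConfig N) (i : Icc (-(N : ℤ)) N) ↦ φ.val i).Injective :=
    fun φ ψ h ↦ Subtype.ext <| funext fun k ↦ by
      by_cases hk : k ∈ Icc (-(N : ℤ)) N
      · exact congrFun h ⟨k, hk⟩
      · rw [φ.apply_eq_zero_of_notMem_Icc hk, ψ.apply_eq_zero_of_notMem_Icc hk]
  have gaussian := (summable_pi_prod (fun _ _ ↦ (exp_pos _).le)
    fun _ ↦ summable_exp_neg_mul_int_sq c_pos).comp_injective restrict_injective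
  refine .of_nonneg_of_le (fun _ ↦ (exp_pos _).le) (fun φ ↦ ?_) gaussian
  rw [Function.comp_apply, ← exp_sum, exp_le_exp, sum_neg_distrib, neg_le_neg_iff,
    sum_coe_sort _ fun i ↦ c * (φ.val i : ℝ) ^ 2, ← mul_sum, energyForm_apply]
  have := mul_le_mul_of_nonneg_left (mul_sum_sq_le_dirichletForm hα φ) hβ.le
  rw [c_def]
  linarith

end DirichletForm

section OriginBound

theorem sum_sumSqIncrements_le_dirichletForm {N : ℕ} {α : ℝ} (hα : 1 < α) (φ : ChainConfig N)
    (n : ℕ) (s : Finset ℕ) :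
    ∑ d ∈ s, sumSqIncrements (fun i ↦ φ.val i) n d / (d : ℝ) ^ α ≤ dirichletForm N hα φ φ := by
  refine le_of_eq_of_le ?_ (sum_dirichletTerm_comp_le hα φ (s ×ˢ range n)
    (f := Prod.map Nat.cast Nat.cast) (Nat.cast_injective.prodMap Nat.cast_injective))
  rw [sum_product]
  refine sum_congr rfl fun d _ ↦ ?_
  rw [sumSqIncrements, sum_div]
  refine sum_congr rfl fun i _ ↦ ?_
  simp only [dirichletTerm, increment, Prod.map_apply, Int.cast_natCast, Nat.abs_cast, Nat.cast_add,
    Int.cast_sub]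
  rw [rpow_neg d.cast_nonneg, ← sq, inv_mul_eq_div]

theorem sq_heightAtOrigin_le {N : ℕ} {β : ℝ} (hβ : 0 < β) (hN : 2 ≤ N) (φ : ChainConfig N) :
    ChainConfig.heightAtOrigin N φ ^ 2 ≤
      8 * N / log N / β * energyForm N β (α := 3) Nat.one_lt_ofNat φ := by
  have origin_le := sq_le_mul_sum_sumSqIncrements (f := fun i ↦ φ.val i) (N := N)
    (fun m hm ↦ by rw [φ.2 m (by rw [Nat.abs_cast]; exact_mod_cast hm), Int.cast_zero]) hN
  have energy_ge :=
    sum_sumSqIncrements_le_dirichletForm (α := 3) Nat.one_lt_ofNat φ (2 * N) (Icc 1 N)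
  simp only [rpow_ofNat] at energy_ge
  rw [energyForm_apply, ← mul_assoc, div_mul_cancel₀ _ hβ.ne']
  refine origin_le.trans ?_
  have := log_natCast_nonneg N
  gcongr

theorem chainVar_three_two_le {N : ℕ} {β : ℝ} (hβ : 0 < β) (hN : 2 ≤ N) :
    chainVar N β 3 2 ≤ 16 / β * N / log N := by
  have hα : (1 : ℝ) < 3 := Nat.one_lt_ofNat
  have log_pos : 0 < log N := log_pos (by exact_mod_cast hN)
  have proxy_pos : 0 < 8 * N / log N / β := by positivity
  have summable_half := summable_exp_neg_energyForm_div_two (N := N) hα hβ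
  rw [chainVar_eq_div hα]
  refine div_le_of_le_mul₀ (tsum_nonneg fun _ ↦ (exp_pos _).le) (by positivity) ?_
  refine (tsum_sq_mul_exp_neg_le proxy_pos (sq_heightAtOrigin_le hβ hN) summable_half).trans_eq ?_
  ring

end OriginBound

section Boxes

/-- The indicator function of the box `{-i, …, i}`. -/
def boxIndicator (i : ℕ) (x : ℤ) : ℤ := if |x| ≤ i then 1 else 0

/-- The sites `x` for which the step from `x` to `x + d` may enter or leave `{-i, …, i}`. -/
noncomputable def boxCrossings (i : ℕ) (d : ℤ) : Finset ℤ :=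
  Ioc (i - d.natAbs : ℤ) (i + d.natAbs) ∪ Ico (-i - d.natAbs : ℤ) (-i + d.natAbs)

theorem card_boxCrossings_le (i : ℕ) (d : ℤ) : #(boxCrossings i d) ≤ 4 * d.natAbs := by
  refine (card_union_le _ _).trans ?_
  rw [Int.card_Ioc, Int.card_Ico]
  lia

theorem increment_boxIndicator_eq_zero {i : ℕ} {d x : ℤ} (hx : x ∉ boxCrossings i d) :
    increment (boxIndicator i) d x = 0 := by
  rw [boxCrossings, mem_union, mem_Ioc, mem_Ico] at hx
  rw [increment, Int.cast_eq_zero, sub_eq_zero]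
  unfold boxIndicator
  split_ifs <;> grind

theorem increment_boxIndicator_mul_le_one (i j : ℕ) (d x : ℤ) :
    increment (boxIndicator i) d x * increment (boxIndicator j) d x ≤ 1 := by
  unfold increment boxIndicator
  split_ifs <;> norm_num

-- A step crossing the boundaries of both boxes is longer than the gap between their radii.
theorem increment_boxIndicator_mul_nonpos {i j : ℕ} {d : ℤ} (hd : d.natAbs ≤ j - i) (x : ℤ) :
    increment (boxIndicator i) d x * increment (boxIndicator j) d x ≤ 0 := by
  unfold increment boxIndicator
  split_ifs <;> first | (norm_num; done) | grind

theorem dirichletTerm_boxIndicator_le (α : ℝ) (i j : ℕ) (d x : ℤ) :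
    dirichletTerm α (boxIndicator i) (boxIndicator j) (d, x) ≤
      if j - i < d.natAbs then |(d : ℝ)| ^ (-α) else 0 := by
  have kernel_nonneg : 0 ≤ |(d : ℝ)| ^ (-α) := by positivity
  rw [dirichletTerm]
  split_ifs with hd
  · exact mul_le_of_le_one_right kernel_nonneg (increment_boxIndicator_mul_le_one i j d x)
  · exact mul_nonpos_of_nonneg_of_nonpos kernel_nonneg
      (increment_boxIndicator_mul_nonpos (not_lt.1 hd) x)

theorem tsum_dirichletTerm_boxIndicator_le (i j : ℕ) (d : ℤ) :
    ∑' x, dirichletTerm 3 (boxIndicator i) (boxIndicator j) (d, x) ≤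
      4 * if j - i < d.natAbs then ((d.natAbs : ℝ) ^ 2)⁻¹ else 0 := by
  rw [tsum_eq_sum (s := boxCrossings i d) fun x hx ↦ by
    rw [dirichletTerm, increment_boxIndicator_eq_zero hx, zero_mul, mul_zero]]
  refine (sum_le_card_nsmul _ _ _ fun x _ ↦ dirichletTerm_boxIndicator_le 3 i j d x).trans ?_
  rw [nsmul_eq_mul]
  split_ifs with hd
  · have natAbs_pos : (0 : ℝ) < d.natAbs := by exact_mod_cast (Nat.zero_le _).trans_lt hd
    have card_le : (#(boxCrossings i d) : ℝ) ≤ 4 * d.natAbs := by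
      exact_mod_cast card_boxCrossings_le i d
    rw [← Int.cast_abs, ← Nat.cast_natAbs, rpow_neg natAbs_pos.le, rpow_ofNat]
    refine (mul_le_mul_of_nonneg_right card_le (by positivity)).trans_eq ?_
    field_simp
  · rw [mul_zero, mul_zero]

/-- The indicator function of `{-i, …, i}`, for `i ≤ N`, as a configuration of length `N`. -/
def boxConfig {N : ℕ} (i : Fin (N + 1)) : ChainConfig N :=
  ⟨boxIndicator i, fun _ hk ↦ if_neg (not_le.2 (by have := i.is_le; lia))⟩

theorem val_boxConfig {N : ℕ} (i : Fin (N + 1)) : (boxConfig i).val = boxIndicator i := rfl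

theorem heightAtOrigin_boxConfig {N : ℕ} (i : Fin (N + 1)) :
    ChainConfig.heightAtOrigin N (boxConfig i) = 1 := by
  rw [ChainConfig.heightAtOrigin_apply, val_boxConfig, boxIndicator, abs_zero,
    if_pos (by positivity), Int.cast_one]

theorem dirichletForm_boxConfig_le_of_le {N : ℕ} {i j : Fin (N + 1)} (h : i ≤ j) :
    dirichletForm N (α := 3) Nat.one_lt_ofNat (boxConfig i) (boxConfig j) ≤
      16 / ((i : ℕ).dist j + 1) := by
  have summable_pairs := summable_dirichletTerm (α := 3) Nat.one_lt_ofNat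
    (boxConfig i) (boxConfig j)
  set r := (j - i : ℕ)
  have tail := hasSum_comp_natAbs (summable_tail_inv_sq r).hasSum
  calc dirichletForm N _ (boxConfig i) (boxConfig j)
      = ∑' d, ∑' x, dirichletTerm 3 (boxIndicator i) (boxIndicator j) (d, x) :=
        summable_pairs.tsum_prod
    _ ≤ ∑' d : ℤ, 4 * if r < d.natAbs then ((d.natAbs : ℝ) ^ 2)⁻¹ else 0 :=
        summable_pairs.prod.tsum_le_tsum (tsum_dirichletTerm_boxIndicator_le i j)
          (tail.summable.mul_left 4)
    _ ≤ 4 * (2 / (r + 1) + 2 / (r + 1)) := by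
        rw [tsum_mul_left, tail.tsum_eq, if_neg (Nat.not_lt_zero r), sub_zero]
        gcongr <;> exact tsum_tail_inv_sq_le r
    _ = 16 / ((i : ℕ).dist j + 1) := by
        rw [Nat.dist_eq_sub_of_le h]
        ring

theorem dirichletForm_boxConfig_le {N : ℕ} (i j : Fin (N + 1)) :
    dirichletForm N (α := 3) Nat.one_lt_ofNat (boxConfig i) (boxConfig j) ≤
      16 / ((i : ℕ).dist j + 1) := by
  rcases le_total i j with h | h
  · exact dirichletForm_boxConfig_le_of_le h
  · rw [dirichletForm_comm, Nat.dist_comm]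
    exact dirichletForm_boxConfig_le_of_le h

theorem exp_polar_boxConfig_sub_one_le {N : ℕ} {β : ℝ} (hβ : 0 ≤ β) (i j : Fin (N + 1)) :
    exp (polar (energyForm N β (α := 3) Nat.one_lt_ofNat) (boxConfig i) (boxConfig j)) - 1 ≤
      32 * β * exp (32 * β) * (1 / ((i : ℕ).dist j + 1)) := by
  set u : ℝ := 1 / ((i : ℕ).dist j + 1)
  have u_le_one : u ≤ 1 := div_le_one_of_le₀ (le_add_of_nonneg_left (by positivity)) (by positivity)
  have polar_le : polar (energyForm N β (α := 3) Nat.one_lt_ofNat) (boxConfig i) (boxConfig j) ≤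
      32 * β * u := by
    rw [polar_energyForm]
    refine (mul_le_mul_of_nonneg_left (dirichletForm_boxConfig_le i j) (by positivity)).trans_eq ?_
    ring
  calc exp (polar (energyForm N β _) (boxConfig i) (boxConfig j)) - 1
      ≤ exp (32 * β * u) - 1 := by gcongr
    _ ≤ 32 * β * u * exp (32 * β * u) := exp_sub_one_le_mul_exp _
    _ ≤ 32 * β * u * exp (32 * β) := by
        gcongr _ * exp ?_
        exact mul_le_of_le_one_right (by positivity) u_le_one
    _ = 32 * β * exp (32 * β) * u := by ring

theorem one_add_log_succ_le_four_mul_log {N : ℕ} (hN : 2 ≤ N) :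
    1 + log (N + 1 : ℕ) ≤ 4 * log N := by
  have two_le : (2 : ℝ) ≤ N := by exact_mod_cast hN
  have log_succ_le : log (N + 1 : ℕ) ≤ 2 * log N := by
    calc log (N + 1 : ℕ) ≤ log ((N : ℝ) ^ 2) := by
          refine log_le_log (by positivity) ?_
          push_cast
          nlinarith
      _ = 2 * log N := by rw [Real.log_pow, Nat.cast_ofNat]
  have log_two_le : log 2 ≤ log N := log_le_log two_pos two_le
  linarith [log_two_gt_d9]

theorem sum_exp_polar_boxConfig_sub_one_le {N : ℕ} {β : ℝ} (hβ : 0 ≤ β) (hN : 2 ≤ N) :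
    ∑ i : Fin (N + 1), ∑ j : Fin (N + 1),
      (exp (polar (energyForm N β (α := 3) Nat.one_lt_ofNat) (boxConfig i) (boxConfig j)) - 1) ≤
      (N + 1) * (256 * β * exp (32 * β) * log N) := by
  set f : ℕ → ℝ := fun d ↦ 32 * β * exp (32 * β) * (1 / (d + 1))
  have sum_f_le : ∑ d ∈ range (N + 1), f d ≤ 32 * β * exp (32 * β) * (4 * log N) := by
    rw [← mul_sum]
    gcongr
    exact (sum_range_one_div_add_one_le _).trans (one_add_log_succ_le_four_mul_log hN)
  calc _ ≤ ∑ i : Fin (N + 1), ∑ j : Fin (N + 1), f ((i : ℕ).dist j) := by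
        gcongr with i _ j _
        exact exp_polar_boxConfig_sub_one_le hβ i j
    _ = ∑ i ∈ range (N + 1), ∑ j ∈ range (N + 1), f (i.dist j) := by
        simp only [fun i : ℕ ↦ Fin.sum_univ_eq_sum_range (fun j ↦ f (i.dist j)) (N + 1),
          Fin.sum_univ_eq_sum_range (fun i ↦ ∑ j ∈ range (N + 1), f (i.dist j)) (N + 1)]
    _ ≤ (N + 1 : ℕ) * (2 * ∑ d ∈ range (N + 1), f d) :=
        sum_range_sum_range_dist_le (fun d ↦ by positivity) (N + 1)
    _ ≤ (N + 1 : ℕ) * (2 * (32 * β * exp (32 * β) * (4 * log N))) := by gcongr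
    _ = (N + 1) * (256 * β * exp (32 * β) * log N) := by
        push_cast
        ring

theorem le_chainVar_three_two {N : ℕ} {β : ℝ} (hβ : 0 < β) (hN : 2 ≤ N) :
    1 / (256 * β * exp (32 * β)) * N / log N ≤ chainVar N β 3 2 := by
  have hα : (1 : ℝ) < 3 := Nat.one_lt_ofNat
  have log_pos : 0 < log N := log_pos (by exact_mod_cast hN)
  have proxy_pos : 0 < 8 * N / log N / β := by positivity
  have summable_half := summable_exp_neg_energyForm_div_two (N := N) hα hβ
  have summable_exp : Summable fun φ ↦ exp (-energyForm N β hα φ) := by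
    simpa only [zero_mul, add_zero] using
      summable_exp_neg_add_mul proxy_pos (sq_heightAtOrigin_le hβ hN) summable_half 0
  have summable_sq := summable_sq_mul_exp_neg proxy_pos (sq_heightAtOrigin_le hβ hN) summable_half
  have partition_pos := summable_exp.tsum_pos (fun _ ↦ (exp_pos _).le) 0 (exp_pos _)
  have score_bound := sq_sum_mul_tsum_le univ boxConfig summable_exp summable_sq
  simp only [heightAtOrigin_boxConfig, sum_const, card_univ, Fintype.card_fin, nsmul_one,
    Nat.cast_succ] at score_bound
  have second_moment_nonneg : 0 ≤ ∑' φ, ChainConfig.heightAtOrigin N φ ^ 2 *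
      exp (-energyForm N β hα φ) := tsum_nonneg fun _ ↦ by positivity
  have partition_le := score_bound.trans (mul_le_mul_of_nonneg_right
    (sum_exp_polar_boxConfig_sub_one_le hβ.le hN) second_moment_nonneg)
  rw [sq, mul_assoc, mul_assoc, mul_le_mul_iff_right₀ (by positivity)] at partition_le
  rw [chainVar_eq_div hα, div_mul_eq_mul_div, one_mul, div_div, div_le_div_iff₀ (by positivity)
    partition_pos, mul_comm (tsum _)]
  refine le_trans ?_ partition_le
  gcongr
  exact (lt_add_one _).le

end Boxes

/-- **Delocalisation of the discrete Gaussian long-range chain at `α = 3`.**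
For every `β ∈ (0,∞)` there exist constants `c_β > 0` and `C_β < ∞` such that
for every `N ≥ 2`, `c_β N/ln N ≤ Var_{N,β,3}[φ(0)] ≤ C_β N/ln N`. -/
theorem gaussian_chain_deloc_alpha_eq_three
    (β : ℝ) (hβ : 0 < β) :
    ∃ c C : ℝ, 0 < c ∧
      ∀ N : ℕ, 2 ≤ N →
        c * (N : ℝ) / Real.log N ≤ chainVar N β 3 2 ∧
          chainVar N β 3 2 ≤ C * (N : ℝ) / Real.log N := by
  refine ⟨1 / (256 * β * exp (32 * β)), 16 / β, by positivity, fun N hN ↦ ⟨?_, ?_⟩⟩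
  · exact le_chainVar_three_two hβ hN
  · exact chainVar_three_two_le hβ hN
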